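/- Fix reals h₁ > 0, h₂ > 0, ρ > 0, ν > 0 and λ > 0, and let J be the 2×2 real matrix J = λ · [[h₁² + ρh₁h₂, ρh₁²/2], [ρh₂² + h₁h₂, 2ρh₁h₂ + h₁²/2 + ρh₂²/ν]] (the Jacobian with respect to (h₁,h₂) of the inviscid bi-layer flux (λh₁²(ρh₂/2 + h₁/3), λh₁h₂(ρh₂ + h₁/2) + (λρ/(3ν))h₂³)). Then J has exactly two eigenvalues, both real and distinct, given by Λ± = (λ/(4ν)) (2ρh₂² + 6ρν h₁h₂ + 3ν h₁² ± √Δ), where Δ = (h₁⁴ + 4ρh₁³h₂ + 12ρ²h₁²h₂²)ν² + 4ρh₁h₂²(2ρh₂ − h₁)ν + 4ρ²h₂⁴ > 0. -/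

import Mathlib

open Matrix

/-!
The discriminant of a `2 × 2` matrix is `(A₀₀ - A₁₁)² + 4 A₀₁ A₁₀`, so off-diagonal entries of the
same sign force two distinct real eigenvalues. Both off-diagonal entries of the bi-layer Jacobian
have the sign of `λ`. Its eigenvalues are then identified by their sum, the trace, and the square
of their difference, the discriminant.
-/

section FinTwo

variable {R : Type*} [CommRing R] {A : Matrix (Fin 2) (Fin 2) R}

variable (A) in
theorem discr_fin_two_eq_sq_add :
    A.discr = (A 0 0 - A 1 1) ^ 2 + 4 * (A 0 1 * A 1 0) := by
  rw [discr_fin_two, trace_fin_two, det_fin_two]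
  ring

theorem charpoly_eq_mul_of_discr_eq_sq [IsDomain R] [NeZero (2 : R)] {a b : R}
    (htrace : A.trace = a + b) (hdiscr : A.discr = (a - b) ^ 2) :
    A.charpoly = (Polynomial.X - Polynomial.C a) * (Polynomial.X - Polynomial.C b) := by
  have hdet : A.det = a * b := by
    have h : (2 * 2) * A.det = (2 * 2) * (a * b) := by
      rw [discr_fin_two, htrace] at hdiscr
      linear_combination -hdiscr
    exact mul_left_cancel₀ (mul_ne_zero two_ne_zero two_ne_zero) h
  rw [charpoly_fin_two, htrace, hdet, Polynomial.C_add, Polynomial.C_mul]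
  ring

theorem isHyperbolic_of_offDiag_mul_pos [LinearOrder R] [IsStrictOrderedRing R]
    (h : 0 < A 0 1 * A 1 0) : A.IsHyperbolic := by
  rw [IsHyperbolic, discr_fin_two_eq_sq_add]
  positivity

end FinTwo

section Bilayer

/-- The Jacobian with respect to `(h₁, h₂)` of the inviscid bi-layer flux
`(λ h₁² (ρ h₂ / 2 + h₁ / 3), λ h₁ h₂ (ρ h₂ + h₁ / 2) + (λ ρ / (3 ν)) h₂³)`. -/
noncomputable def bilayerJacobian (h₁ h₂ ρ ν lam : ℝ) : Matrix (Fin 2) (Fin 2) ℝ :=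
  lam • !![h₁ ^ 2 + ρ * h₁ * h₂, ρ * h₁ ^ 2 / 2;
           ρ * h₂ ^ 2 + h₁ * h₂, 2 * ρ * h₁ * h₂ + h₁ ^ 2 / 2 + ρ * h₂ ^ 2 / ν]

/-- The radicand `Δ` in the bi-layer group velocities: the discriminant of `bilayerJacobian`
cleared of the factor `(λ / (2 ν))²`, and hence polynomial in the parameters. -/
def bilayerRadicand (h₁ h₂ ρ ν : ℝ) : ℝ :=
  (h₁ ^ 4 + 4 * ρ * h₁ ^ 3 * h₂ + 12 * ρ ^ 2 * h₁ ^ 2 * h₂ ^ 2) * ν ^ 2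
    + 4 * ρ * h₁ * h₂ ^ 2 * (2 * ρ * h₂ - h₁) * ν + 4 * ρ ^ 2 * h₂ ^ 4

variable {h₁ h₂ ρ ν lam : ℝ}

theorem trace_bilayerJacobian (hν : ν ≠ 0) :
    (bilayerJacobian h₁ h₂ ρ ν lam).trace
      = lam / (2 * ν) * (2 * ρ * h₂ ^ 2 + 6 * ρ * ν * h₁ * h₂ + 3 * ν * h₁ ^ 2) := by
  simp only [bilayerJacobian, trace_smul, trace_fin_two_of, smul_eq_mul]
  field

theorem discr_bilayerJacobian (hν : ν ≠ 0) :
    (bilayerJacobian h₁ h₂ ρ ν lam).discr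
      = (lam / (2 * ν)) ^ 2 * bilayerRadicand h₁ h₂ ρ ν := by
  rw [discr_fin_two_eq_sq_add]
  simp only [bilayerJacobian, bilayerRadicand, Matrix.smul_apply, of_apply, cons_val',
    cons_val_zero, cons_val_one, cons_val_fin_one, smul_eq_mul]
  field

theorem isHyperbolic_bilayerJacobian (hh₁ : 0 < h₁) (hh₂ : 0 < h₂) (hρ : 0 < ρ) (hlam : lam ≠ 0) :
    (bilayerJacobian h₁ h₂ ρ ν lam).IsHyperbolic := by
  apply isHyperbolic_of_offDiag_mul_pos
  have hprod : bilayerJacobian h₁ h₂ ρ ν lam 0 1 * bilayerJacobian h₁ h₂ ρ ν lam 1 0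
      = lam ^ 2 * (ρ * h₁ ^ 2 / 2 * (ρ * h₂ ^ 2 + h₁ * h₂)) := by
    simp only [bilayerJacobian, Matrix.smul_apply, of_apply, cons_val', cons_val_zero,
      cons_val_one, cons_val_fin_one, smul_eq_mul]
    ring
  rw [hprod]
  positivity

end Bilayer

/-- The Jacobian of the inviscid bi-layer flux has exactly two eigenvalues, both real and
distinct, given by `Λ± = (λ/(4ν)) (2ρh₂² + 6ρν h₁h₂ + 3ν h₁² ± √Δ)` with `Δ > 0`. -/
theorem bilayer_jacobian_eigenvalues
    (h₁ h₂ ρ ν lam : ℝ) (hh₁ : 0 < h₁) (hh₂ : 0 < h₂) (hρ : 0 < ρ) (hν : 0 < ν)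
    (hlam : 0 < lam)
    (J : Matrix (Fin 2) (Fin 2) ℝ)
    (hJ : J = lam • !![h₁ ^ 2 + ρ * h₁ * h₂, ρ * h₁ ^ 2 / 2;
                       ρ * h₂ ^ 2 + h₁ * h₂, 2 * ρ * h₁ * h₂ + h₁ ^ 2 / 2 + ρ * h₂ ^ 2 / ν])
    (Δ : ℝ)
    (hΔ : Δ = (h₁ ^ 4 + 4 * ρ * h₁ ^ 3 * h₂ + 12 * ρ ^ 2 * h₁ ^ 2 * h₂ ^ 2) * ν ^ 2
        + 4 * ρ * h₁ * h₂ ^ 2 * (2 * ρ * h₂ - h₁) * ν + 4 * ρ ^ 2 * h₂ ^ 4)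
    (Λp Λm : ℝ)
    (hΛp : Λp = lam / (4 * ν)
        * (2 * ρ * h₂ ^ 2 + 6 * ρ * ν * h₁ * h₂ + 3 * ν * h₁ ^ 2 + Real.sqrt Δ))
    (hΛm : Λm = lam / (4 * ν)
        * (2 * ρ * h₂ ^ 2 + 6 * ρ * ν * h₁ * h₂ + 3 * ν * h₁ ^ 2 - Real.sqrt Δ)) :
    0 < Δ ∧ Λm < Λp ∧
      ∀ z : ℂ, (J.map (algebraMap ℝ ℂ)).charpoly.IsRoot z ↔ z = (Λp : ℂ) ∨ z = (Λm : ℂ) := by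
  have hdiscr : J.discr = (lam / (2 * ν)) ^ 2 * Δ := by
    rw [hJ, hΔ]
    exact discr_bilayerJacobian hν.ne'
  have hdiscr_pos : 0 < J.discr := hJ ▸ isHyperbolic_bilayerJacobian hh₁ hh₂ hρ hlam.ne'
  have hΔ_pos : 0 < Δ := (mul_pos_iff_of_pos_left (by positivity)).mp (hdiscr ▸ hdiscr_pos)
  have hgap : Λp - Λm = lam / (2 * ν) * √Δ := by rw [hΛp, hΛm]; ring
  have htrace : J.trace = Λp + Λm := by
    rw [hJ, hΛp, hΛm]
    exact (trace_bilayerJacobian hν.ne').trans (by ring)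
  have hdiscr_gap : J.discr = (Λp - Λm) ^ 2 := by
    rw [hdiscr, hgap, mul_pow, Real.sq_sqrt hΔ_pos.le]
  have hlt : Λm < Λp := sub_pos.mp (hgap ▸ by positivity)
  refine ⟨hΔ_pos, hlt, fun z ↦ ?_⟩
  rw [charpoly_map, charpoly_eq_mul_of_discr_eq_sq htrace hdiscr_gap, Polynomial.map_mul,
    Polynomial.root_mul]
  simp [sub_eq_zero]
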